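/- Let n₀,n₁,n₂,n₃ ∈ ℂ and let p(τ) be a holomorphic function on an open connected subset V ⊆ ℍ such that for every τ ∈ V one has 2p(τ) ∉ Λ_τ and p(τ) + ω_k/2 ∉ Λ_τ for k = 0,1,2,3, and such that p satisfies the elliptic form of Painlevé VI with parameters α_k = (1/2)(n_k + 1/2)², i.e. d²p/dτ² = (−1/(4π²)) Σ_{k=0}^{3} (1/2)(n_k + 1/2)² ℘′(p(τ) + ω_k/2 | τ). Define A(τ) = 2πi p′(τ) + (1/2)(ζ(2p(τ)|τ) − 2p(τ)η₁(τ)). Then (p(τ), A(τ)) satisfies the Hamiltonian system on V. -/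

import Mathlib

open Complex Filter Topology Asymptotics

noncomputable section

/-- membership in the lattice `Λ_τ = ℤ + τℤ`. -/
def InLattice (τ z : ℂ) : Prop := ∃ m n : ℤ, z = (m : ℂ) + (n : ℂ) * τ

/-- the half-period generators `ω₀ = 0, ω₁ = 1, ω₂ = τ, ω₃ = 1 + τ`. -/
def halfp (τ : ℂ) : Fin 4 → ℂ := ![0, 1, τ, 1 + τ]

/-- the Weierstrass elliptic function `℘(z|τ)`. -/
def wp (τ z : ℂ) : ℂ :=
  z⁻¹ ^ 2 + ∑' w : {w : ℤ × ℤ // w ≠ 0},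
    ((z - ((w.1.1 : ℂ) + (w.1.2 : ℂ) * τ))⁻¹ ^ 2 - ((w.1.1 : ℂ) + (w.1.2 : ℂ) * τ)⁻¹ ^ 2)

/-- `℘′(z|τ)`, the `z`-derivative of `℘`. -/
def wpd (τ z : ℂ) : ℂ := deriv (wp τ) z

/-- `℘″(z|τ)`. -/
def wpdd (τ z : ℂ) : ℂ := deriv (wpd τ) z

def e1 (τ : ℂ) : ℂ := wp τ (1 / 2)
def e2 (τ : ℂ) : ℂ := wp τ (τ / 2)
def e3 (τ : ℂ) : ℂ := wp τ ((1 + τ) / 2)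

def g2 (τ : ℂ) : ℂ := -4 * (e1 τ * e2 τ + e1 τ * e3 τ + e2 τ * e3 τ)

/-- `zeta` is the Weierstrass zeta function: for each `τ ∈ ℍ`, `zeta τ` is odd, satisfies
`∂ζ/∂z = -℘` off the lattice, and `ζ(z|τ) - 1/z → 0` as `z → 0`. -/
def IsWeierstrassZeta (zeta : ℂ → ℂ → ℂ) : Prop :=
  ∀ τ : ℂ, 0 < τ.im →
    (∀ z : ℂ, zeta τ (-z) = - zeta τ z) ∧
    (∀ z : ℂ, ¬ InLattice τ z → HasDerivAt (zeta τ) (- wp τ z) z) ∧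
    Tendsto (fun z => zeta τ z - z⁻¹) (𝓝[≠] (0 : ℂ)) (𝓝 0)

/-- `eta1 τ = ζ(z+1|τ) - ζ(z|τ)` is the first quasi-period. -/
def IsEta1 (zeta : ℂ → ℂ → ℂ) (eta1 : ℂ → ℂ) : Prop :=
  ∀ τ : ℂ, 0 < τ.im → ∀ z : ℂ, ¬ InLattice τ z →
    eta1 τ = zeta τ (z + 1) - zeta τ z

/-- `eta2 τ = ζ(z+τ|τ) - ζ(z|τ)` is the second quasi-period. -/
def IsEta2 (zeta : ℂ → ℂ → ℂ) (eta2 : ℂ → ℂ) : Prop :=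
  ∀ τ : ℂ, 0 < τ.im → ∀ z : ℂ, ¬ InLattice τ z →
    eta2 τ = zeta τ (z + τ) - zeta τ z

/-- `sigma` is the Weierstrass sigma function: entire, odd, with
`∂/∂z log σ = ζ` off the lattice and `σ(z|τ)/z → 1` as `z → 0`. -/
def IsWeierstrassSigma (zeta sigma : ℂ → ℂ → ℂ) : Prop :=
  ∀ τ : ℂ, 0 < τ.im →
    (∀ z : ℂ, sigma τ (-z) = - sigma τ z) ∧
    Differentiable ℂ (sigma τ) ∧
    (∀ z : ℂ, ¬ InLattice τ z → HasDerivAt (sigma τ) (zeta τ z * sigma τ z) z) ∧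
    Tendsto (fun z => sigma τ z / z) (𝓝[≠] (0 : ℂ)) (𝓝 1)

/-- the Hamiltonian system (142) for `(p(τ), A(τ))` on `V`. -/
def HamSystem (n : Fin 4 → ℂ) (zeta : ℂ → ℂ → ℂ) (eta1 : ℂ → ℂ)
    (V : Set ℂ) (p A : ℂ → ℂ) : Prop :=
  ∀ τ ∈ V,
    HasDerivAt p ((-Complex.I / (4 * (Real.pi : ℂ))) *
      (2 * A τ - zeta τ (2 * p τ) + 2 * p τ * eta1 τ)) τ ∧
    HasDerivAt A ((Complex.I / (4 * (Real.pi : ℂ))) *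
      ((2 * wp τ (2 * p τ) + 2 * eta1 τ) * A τ - (3 / 2) * wpd τ (2 * p τ)
        - ∑ k : Fin 4, n k * (n k + 1) * wpd τ (p τ + halfp τ k / 2))) τ

/-- the generalized Lamé potential `I(z;τ)`. -/
def Ipot (n : Fin 4 → ℂ) (zeta : ℂ → ℂ → ℂ) (A B p τ z : ℂ) : ℂ :=
  (∑ k : Fin 4, n k * (n k + 1) * wp τ (z + halfp τ k / 2))
    + (3 / 4) * (wp τ (z + p) + wp τ (z - p))
    + A * (zeta τ (z + p) - zeta τ (z - p)) + B

end

/-!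
Write `Z(z, τ) = ζ(z|τ) - z η₁(τ)`, so that `A = 2πi p′ + Z(2p, τ) / 2`. This `Z` is Eisenstein's
series `∑ π cot(π(z + nτ))`, the logarithmic derivative in `z` of the odd theta function: both have
a simple pole at the lattice points and `z`-derivative `-℘` up to a constant. From the series one
reads off `Z(z + τ) = Z(z) - 2πi`, hence `4πi ∂_τ Z - ∂_z(∂_z Z + Z²)` is an odd elliptic function
without poles, and by Liouville it vanishes: the heat equation of the theta function. With
`∂_z Z = -℘ - η₁` it expresses `∂_τ Z` through `℘`, `℘′` and `Z`, and the duplication formula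
`∑ₖ ℘′(z + ωₖ/2) = 8 ℘′(2z)` absorbs the constant part of `(nₖ + 1/2)² = nₖ(nₖ + 1) + 1/4`. The
derivative of `A` along a solution of Painlevé VI is then the Hamiltonian right-hand side.
-/

noncomputable section

open scoped Real

section PartialDerivatives

variable {𝕜 E : Type*} [NontriviallyNormedField 𝕜] [NormedAddCommGroup E] [NormedSpace 𝕜 E]

lemma hasDerivAt_comp_of_differentiableAt_uncurry {F : 𝕜 → 𝕜 → E} {f g : 𝕜 → 𝕜} {f' g' t : 𝕜}
    (hF : DifferentiableAt 𝕜 (Function.uncurry F) (f t, g t)) (hf : HasDerivAt f f' t)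
    (hg : HasDerivAt g g' t) : HasDerivAt (fun s => F (f s) (g s))
      (f' • deriv (fun s => F s (g t)) (f t) + g' • deriv (F (f t)) (g t)) t := by
  set L := fderiv 𝕜 (Function.uncurry F) (f t, g t)
  have hL : HasFDerivAt (Function.uncurry F) L (f t, g t) := hF.hasFDerivAt
  have hfst : HasDerivAt (fun s => F s (g t)) (L (1, 0)) (f t) :=
    hL.comp_hasDerivAt (f t) (f := fun s => (s, g t))
      ((hasDerivAt_id (f t)).prodMk (hasDerivAt_const (f t) (g t)))
  have hsnd : HasDerivAt (F (f t)) (L (0, 1)) (g t) :=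
    hL.comp_hasDerivAt (g t) ((hasDerivAt_const (g t) (f t)).prodMk (hasDerivAt_id (g t)))
  refine (hL.comp_hasDerivAt t (hf.prodMk hg)).congr_deriv ?_
  rw [hfst.deriv, hsnd.deriv, ← map_smul, ← map_smul, ← map_add]
  simp

end PartialDerivatives

section Series

lemma hasFDerivAt_tsum_of_eventually_norm_le {𝕜 E F : Type*} [RCLike 𝕜]
    [NormedAddCommGroup E] [NormedSpace 𝕜 E]
    [NormedAddCommGroup F] [NormedSpace 𝕜 F] [CompleteSpace F]
    {f : ℕ → E → F} {f' : ℕ → E → E →L[𝕜] F} {u : ℕ → ℝ} {U : Set E} {x : E}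
    (hu : Summable u) (hU : IsOpen U) (hU' : IsPreconnected U) (hx : x ∈ U)
    (hf : ∀ n, HasFDerivAt (f n) (f' n x) x)
    (hfU : ∀ᶠ n in atTop, ∀ y ∈ U, HasFDerivAt (f n) (f' n y) y ∧ ‖f' n y‖ ≤ u n)
    (hsum : Summable fun n => f n x) :
    HasFDerivAt (fun y => ∑' n, f n y) (∑' n, f' n x) x := by
  obtain ⟨N, hN⟩ := eventually_atTop.1 hfU
  have hder (n : ℕ) (y : E) (hy : y ∈ U) := (hN (n + N) (Nat.le_add_left N n) y hy).1
  have hbound (n : ℕ) (y : E) (hy : y ∈ U) := (hN (n + N) (Nat.le_add_left N n) y hy).2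
  have hu' : Summable fun n => u (n + N) := (summable_nat_add_iff N).2 hu
  have hsum' : Summable fun n => f (n + N) x :=
    (summable_nat_add_iff (f := fun n => f n x) N).2 hsum
  have hf'sum : Summable fun n => f' n x :=
    (summable_nat_add_iff N).1 (.of_norm_bounded hu' fun n => hbound n x hx)
  have hsplit := (HasFDerivAt.fun_sum (u := Finset.range N) fun n _ => hf n).add
    (hasFDerivAt_tsum_of_isPreconnected hu' hU hU' hder hbound hx hsum' hx)
  rw [hf'sum.sum_add_tsum_nat_add] at hsplit
  refine hsplit.congr_of_eventuallyEq ?_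
  filter_upwards [hU.mem_nhds hx] with y hy
  have hsumy :=
    summable_of_summable_hasFDerivAt_of_isPreconnected hu' hU hU' hder hbound hx hsum' hy
  exact (((summable_nat_add_iff (f := fun n => f n y) N).1 hsumy).sum_add_tsum_nat_add N).symm

lemma tendsto_natCast_add_one_mul_sub_atTop {δ : ℝ} (hδ : 0 < δ) (R : ℝ) :
    Tendsto (fun n : ℕ => ((n : ℝ) + 1) * δ - R) atTop atTop :=
  tendsto_atTop_add_const_right _ _ ((tendsto_atTop_add_const_right _ _
    tendsto_natCast_atTop_atTop).atTop_mul_const hδ)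

end Series

section Laurent

variable {𝕜 : Type*} [NontriviallyNormedField 𝕜]

lemma analyticAt_dslope {E : Type*} [NormedAddCommGroup E] [NormedSpace 𝕜 E] {f : 𝕜 → E}
    {z₀ : 𝕜} (hf : AnalyticAt 𝕜 f z₀) : AnalyticAt 𝕜 (dslope f z₀) z₀ :=
  let ⟨_, hp⟩ := hf
  hp.has_fpower_series_dslope_fslope.analyticAt

lemma exists_analyticAt_logDeriv_eq_inv_add [CompleteSpace 𝕜] {f : 𝕜 → 𝕜} {z₀ : 𝕜}
    (hf : AnalyticAt 𝕜 f z₀) (h₀ : f z₀ = 0) (h₁ : deriv f z₀ ≠ 0) :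
    ∃ h : 𝕜 → 𝕜, AnalyticAt 𝕜 h z₀ ∧ logDeriv f =ᶠ[𝓝[≠] z₀] fun z => (z - z₀)⁻¹ + h z := by
  have hq := analyticAt_dslope hf
  have hq₀ : dslope f z₀ z₀ ≠ 0 := by rwa [dslope_same]
  have hfactor : f = fun z => (z - z₀) * dslope f z₀ z :=
    funext fun z => (sub_smul_dslope_of_zero h₀ z).symm
  refine ⟨logDeriv (dslope f z₀), hq.deriv.div hq hq₀, ?_⟩
  filter_upwards [self_mem_nhdsWithin, nhdsWithin_le_nhds hq.eventually_analyticAt,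
    nhdsWithin_le_nhds (hq.continuousAt.eventually_ne hq₀)] with z hz hqz hqz₀
  have hz : z - z₀ ≠ 0 := sub_ne_zero.2 hz
  conv_lhs => rw [hfactor]
  rw [logDeriv_mul z hz hqz₀ (by fun_prop) hqz.differentiableAt]
  simp [logDeriv_apply]

lemma analyticAt_of_odd_of_eventuallyEq_nhdsNE [CharZero 𝕜] {f g : 𝕜 → 𝕜}
    (hodd : ∀ z, f (-z) = -f z) (hg : AnalyticAt 𝕜 g 0)
    (hfg : f =ᶠ[𝓝[≠] 0] g) : AnalyticAt 𝕜 f 0 := by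
  have hf₀ : f 0 = 0 := self_eq_neg.1 (by simpa using hodd 0)
  have hlim : Tendsto f (𝓝[≠] 0) (𝓝 (g 0)) :=
    (hg.continuousAt.mono_left nhdsWithin_le_nhds).congr' hfg.symm
  have hneg : Tendsto (-· : 𝕜 → 𝕜) (𝓝[≠] 0) (𝓝[≠] 0) := by
    simpa using (hasDerivAt_neg (0 : 𝕜)).tendsto_nhdsNE (neg_ne_zero.2 one_ne_zero)
  have hg₀ : g 0 = 0 :=
    self_eq_neg.1 (tendsto_nhds_unique (hlim.comp hneg) (hlim.neg.congr fun z => (hodd z).symm))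
  refine hg.congr ((eventually_nhdsWithin_iff.1 hfg).mono fun z hz => ?_)
  rcases eq_or_ne z 0 with rfl | h
  · rw [hf₀, hg₀]
  · exact (hz h).symm
lemma deriv_eventuallyEq_of_analyticAt_sub_inv [CompleteSpace 𝕜] {f : 𝕜 → 𝕜}
    (hf : AnalyticAt 𝕜 (fun z => f z - z⁻¹) 0) :
    deriv f =ᶠ[𝓝[≠] 0] fun z => deriv (fun z => f z - z⁻¹) z - (z ^ 2)⁻¹ := by
  filter_upwards [hf.eventually_analyticAt.filter_mono nhdsWithin_le_nhds, self_mem_nhdsWithin]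
    with z hz hz₀
  have hsum := hz.differentiableAt.hasDerivAt.add (hasDerivAt_inv hz₀)
  simpa [← sub_eq_add_neg] using (hsum.congr_of_eventuallyEq
    (.of_forall fun w => by simp : f =ᶠ[𝓝 z] _)).deriv

lemma exists_analyticAt_deriv_add_sq [CompleteSpace 𝕜] {f : 𝕜 → 𝕜} (hf₀ : f 0 = 0)
    (hf : AnalyticAt 𝕜 (fun z => f z - z⁻¹) 0) :
    ∃ g, AnalyticAt 𝕜 g 0 ∧ (fun z => deriv f z + f z ^ 2) =ᶠ[𝓝[≠] 0] g := by
  set h : 𝕜 → 𝕜 := fun z => f z - z⁻¹ with hh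
  have hh₀ : h 0 = 0 := by simp [hh, hf₀]
  refine ⟨fun z => deriv h z + 2 * dslope h 0 z + h z ^ 2,
    (hf.deriv.add (analyticAt_const.mul (analyticAt_dslope hf))).add (hf.pow 2), ?_⟩
  filter_upwards [deriv_eventuallyEq_of_analyticAt_sub_inv hf, self_mem_nhdsWithin] with z hz hz₀
  have hfz : f z = z⁻¹ + h z := by simp [hh]
  rw [hz, hfz, dslope_of_ne h hz₀, slope_def_field, hh₀, sub_zero, sub_zero]
  ring
end Laurent

/-! ### Eisenstein summation -/

section Decay

lemma differentiableAt_deriv_of_isOpen {E : Type*} [NormedAddCommGroup E] [NormedSpace ℂ E]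
    [CompleteSpace E] {f : ℂ → E} {U : Set ℂ} {z : ℂ} (hU : IsOpen U)
    (hf : ∀ w ∈ U, DifferentiableAt ℂ f w) (hz : z ∈ U) : DifferentiableAt ℂ (deriv f) z :=
  (DifferentiableOn.deriv (fun w hw => (hf w hw).differentiableWithinAt) hU).differentiableAt
    (hU.mem_nhds hz)

/-- `G` is holomorphic on the upper half-plane and decays like `exp (-2π Im w)` as `Im w → ∞`, as a
`1`-periodic function vanishing at the cusp `i∞` does. -/
structure DecaysAtImInfty (G : ℂ → ℂ) : Prop where
  differentiableAt : ∀ w : ℂ, 0 < w.im → DifferentiableAt ℂ G w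
  isBigO : G =O[comap im atTop] fun w => Real.exp (-2 * π * w.im)

namespace DecaysAtImInfty

variable {G : ℂ → ℂ}

lemma exists_norm_le (hG : DecaysAtImInfty G) :
    ∃ C a : ℝ, ∀ w : ℂ, a ≤ w.im → ‖G w‖ ≤ C * Real.exp (-2 * π * w.im) := by
  obtain ⟨C, hC⟩ := hG.isBigO.bound
  obtain ⟨a, ha⟩ := eventually_atTop.1 (eventually_comap.1 hC)
  exact ⟨C, a, fun w hw => by simpa using ha w.im hw w rfl⟩

/-- Cauchy's estimate on discs of radius one. -/
protected lemma deriv (hG : DecaysAtImInfty G) : DecaysAtImInfty (deriv G) where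
  differentiableAt _ hw := differentiableAt_deriv_of_isOpen
    (isOpen_lt continuous_const continuous_im) hG.differentiableAt hw
  isBigO := by
    obtain ⟨C, a, hC⟩ := hG.exists_norm_le
    refine .of_bound (C * Real.exp (2 * π)) (eventually_comap.2 ?_)
    filter_upwards [eventually_ge_atTop (a + 1), eventually_gt_atTop 1] with b hb hb₁ w hw
    have him {y : ℂ} (hy : dist y w ≤ 1) : b - 1 ≤ y.im := by
      have := abs_le.1 ((abs_im_le_norm (y - w)).trans (dist_eq_norm y w ▸ hy))
      rw [sub_im, hw] at this
      linarith [this.1]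
    have hd : DiffContOnCl ℂ G (Metric.ball w 1) := by
      refine DifferentiableOn.diffContOnCl fun y hy => ?_
      rw [closure_ball w one_ne_zero, Metric.mem_closedBall] at hy
      exact (hG.differentiableAt y (by linarith [him hy])).differentiableWithinAt
    have hC0 : 0 ≤ C := nonneg_of_mul_nonneg_left
      ((norm_nonneg _).trans (hC w (by linarith))) (Real.exp_pos _)
    have hbound (y : ℂ) (hy : y ∈ Metric.sphere w 1) :
        ‖G y‖ ≤ C * Real.exp (2 * π) * Real.exp (-2 * π * w.im) := by
      have hy' := him (Metric.mem_sphere.1 hy).le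
      refine (hC y (by linarith)).trans ?_
      rw [mul_assoc C, ← Real.exp_add]
      gcongr
      nlinarith [Real.pi_pos]
    simpa using norm_deriv_le_of_forall_mem_sphere_norm_le one_pos hd hbound

lemma exists_summable_bound (hG : DecaysAtImInfty G) (k : ℕ) {δ : ℝ} (hδ : 0 < δ) (R : ℝ) :
    ∃ u : ℕ → ℝ, Summable u ∧ ∀ᶠ n : ℕ in atTop, ∀ w : ℂ, (n + 1) * δ - R ≤ w.im →
      ‖((n : ℂ) + 1) ^ k * G w‖ ≤ u n := by
  obtain ⟨C, a, hC⟩ := hG.exists_norm_le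
  set r : ℝ := Real.exp (-2 * π * δ) with hr
  have hr1 : ‖r‖ < 1 := by
    rw [Real.norm_of_nonneg (Real.exp_pos _).le, Real.exp_lt_one_iff]
    nlinarith [Real.pi_pos]
  refine ⟨fun n => C * Real.exp (2 * π * R) * (((n + 1 : ℕ) : ℝ) ^ k * r ^ (n + 1)),
    ((summable_nat_add_iff (f := fun n : ℕ => (n : ℝ) ^ k * r ^ n) 1).2
      (summable_pow_mul_geometric_of_norm_lt_one k hr1)).mul_left _, ?_⟩
  filter_upwards [(tendsto_natCast_add_one_mul_sub_atTop hδ R).eventually_ge_atTop a]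
    with n hn w hw
  have hC0 : 0 ≤ C := nonneg_of_mul_nonneg_left
    ((norm_nonneg _).trans (hC w (hn.trans hw))) (Real.exp_pos _)
  have hexp : Real.exp (-2 * π * w.im) ≤ Real.exp (2 * π * R) * r ^ (n + 1) := by
    rw [hr, ← Real.exp_nat_mul, ← Real.exp_add, Real.exp_le_exp]
    push_cast
    nlinarith [Real.pi_pos]
  have hnorm : ‖((n : ℂ) + 1) ^ k‖ = ((n + 1 : ℕ) : ℝ) ^ k := by
    rw [norm_pow, ← Nat.cast_succ, norm_natCast]
  calc ‖((n : ℂ) + 1) ^ k * G w‖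
      = ((n + 1 : ℕ) : ℝ) ^ k * ‖G w‖ := by rw [norm_mul, hnorm]
    _ ≤ ((n + 1 : ℕ) : ℝ) ^ k * (C * (Real.exp (2 * π * R) * r ^ (n + 1))) := by
        gcongr
        exact (hC w (hn.trans hw)).trans (by gcongr)
    _ = C * Real.exp (2 * π * R) * (((n + 1 : ℕ) : ℝ) ^ k * r ^ (n + 1)) := by ring

end DecaysAtImInfty

end Decay

section UpperSum
variable {G : ℂ → ℂ} {τ z : ℂ}

/-- The series `∑_{n ≥ 1} n ^ k G(z + n τ)` at `x = (z, τ)`: half of an Eisenstein summation over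
`ℤ + τℤ`, with the weights that differentiation in `τ` produces. -/
def upperSum (k : ℕ) (G : ℂ → ℂ) (x : ℂ × ℂ) : ℂ :=
  ∑' n : ℕ, ((n : ℂ) + 1) ^ k * G (x.1 + (n + 1) * x.2)

lemma exists_isOpen_convex_le_im {x : ℂ × ℂ} (hx : 0 < x.2.im) :
    ∃ U : Set (ℂ × ℂ), IsOpen U ∧ Convex ℝ U ∧ x ∈ U ∧ ∃ δ > 0, ∃ R : ℝ, ∀ y ∈ U, ∀ n : ℕ,
      (n + 1) * δ - R ≤ (y.1 + (n + 1) * y.2).im := by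
  obtain ⟨δ, hδ, hδx⟩ := exists_between hx
  obtain ⟨R, hR⟩ := exists_gt (-x.1.im)
  refine ⟨{y | -R < y.1.im} ∩ {y | δ < y.2.im}, ?_, ?_, ⟨neg_lt.1 hR, hδx⟩, δ, hδ, R, ?_⟩
  · exact (isOpen_lt continuous_const (continuous_im.comp continuous_fst)).inter
      (isOpen_lt continuous_const (continuous_im.comp continuous_snd))
  · exact (convex_halfSpace_gt (imLm.comp (LinearMap.fst ℝ ℂ ℂ)).isLinear _).inter
      (convex_halfSpace_gt (imLm.comp (LinearMap.snd ℝ ℂ ℂ)).isLinear _)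
  · rintro y ⟨h₁ : -R < y.1.im, h₂ : δ < y.2.im⟩ n
    have him : (y.1 + (n + 1) * y.2).im = y.1.im + (n + 1) * y.2.im := by simp
    have hmul : ((n : ℝ) + 1) * δ ≤ (n + 1) * y.2.im := by gcongr
    linarith

lemma summable_upperSum (hG : DecaysAtImInfty G) (k : ℕ) {x : ℂ × ℂ} (hx : 0 < x.2.im) :
    Summable fun n : ℕ => ((n : ℂ) + 1) ^ k * G (x.1 + (n + 1) * x.2) := by
  obtain ⟨U, -, -, hxU, δ, hδ, R, hU⟩ := exists_isOpen_convex_le_im hx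
  obtain ⟨u, hu, hbound⟩ := hG.exists_summable_bound k hδ R
  refine .of_norm_bounded_eventually_nat hu ?_
  filter_upwards [hbound] with n hn using hn _ (hU x hxU n)

lemma hasFDerivAt_upperSum_term (k n : ℕ) {y : ℂ × ℂ}
    (hy : DifferentiableAt ℂ G (y.1 + (n + 1) * y.2)) :
    HasFDerivAt (fun y : ℂ × ℂ => ((n : ℂ) + 1) ^ k * G (y.1 + (n + 1) * y.2))
      ((((n : ℂ) + 1) ^ k * deriv G (y.1 + (n + 1) * y.2)) •
        (.fst ℂ ℂ ℂ + ((n : ℂ) + 1) • .snd ℂ ℂ ℂ : ℂ × ℂ →L[ℂ] ℂ)) y := by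
  have hlin := (hasFDerivAt_fst (𝕜 := ℂ) (p := y)).add
    ((hasFDerivAt_snd (𝕜 := ℂ) (p := y)).const_mul ((n : ℂ) + 1))
  exact ((hy.hasDerivAt.comp_hasFDerivAt y hlin).const_mul _).congr_fderiv (smul_smul _ _ _)

lemma norm_fst_add_smul_snd_le (n : ℕ) :
    ‖(.fst ℂ ℂ ℂ + ((n : ℂ) + 1) • .snd ℂ ℂ ℂ : ℂ × ℂ →L[ℂ] ℂ)‖ ≤ 2 * ‖(n : ℂ) + 1‖ := by
  have hn : 1 ≤ ‖(n : ℂ) + 1‖ := by rw [← Nat.cast_succ, norm_natCast]; simp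
  have hsnd := mul_le_of_le_one_right (norm_nonneg ((n : ℂ) + 1))
    (ContinuousLinearMap.norm_snd_le ℂ ℂ ℂ)
  calc ‖(.fst ℂ ℂ ℂ + ((n : ℂ) + 1) • .snd ℂ ℂ ℂ : ℂ × ℂ →L[ℂ] ℂ)‖
      ≤ 1 + ‖(n : ℂ) + 1‖ := (norm_add_le _ _).trans
        (add_le_add (ContinuousLinearMap.norm_fst_le ..) ((norm_smul _ _).trans_le hsnd))
    _ ≤ 2 * ‖(n : ℂ) + 1‖ := by linarith

lemma hasFDerivAt_upperSum (hG : DecaysAtImInfty G) (k : ℕ) {x : ℂ × ℂ} (hx : 0 < x.2.im)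
    (hreg : ∀ n : ℕ, DifferentiableAt ℂ G (x.1 + (n + 1) * x.2)) :
    HasFDerivAt (upperSum k G) (upperSum k (deriv G) x • ContinuousLinearMap.fst ℂ ℂ ℂ +
      upperSum (k + 1) (deriv G) x • ContinuousLinearMap.snd ℂ ℂ ℂ) x := by
  obtain ⟨U, hUo, hUc, hxU, δ, hδ, R, hU⟩ := exists_isOpen_convex_le_im hx
  obtain ⟨u, hu, hbound⟩ := hG.deriv.exists_summable_bound (k + 1) hδ R
  have hpos := (tendsto_natCast_add_one_mul_sub_atTop hδ R).eventually_gt_atTop 0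
  have hterms : ∀ᶠ n : ℕ in atTop, ∀ y ∈ U,
      HasFDerivAt (fun y : ℂ × ℂ => ((n : ℂ) + 1) ^ k * G (y.1 + (n + 1) * y.2))
        ((((n : ℂ) + 1) ^ k * deriv G (y.1 + (n + 1) * y.2)) •
          (.fst ℂ ℂ ℂ + ((n : ℂ) + 1) • .snd ℂ ℂ ℂ : ℂ × ℂ →L[ℂ] ℂ)) y ∧
      ‖(((n : ℂ) + 1) ^ k * deriv G (y.1 + (n + 1) * y.2)) •
        (.fst ℂ ℂ ℂ + ((n : ℂ) + 1) • .snd ℂ ℂ ℂ : ℂ × ℂ →L[ℂ] ℂ)‖ ≤ 2 * u n := by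
    filter_upwards [hbound, hpos] with n hn hn₀ y hy
    refine ⟨hasFDerivAt_upperSum_term k n
      (hG.differentiableAt _ (hn₀.trans_le (hU y hy n))), ?_⟩
    calc _ ≤ ‖((n : ℂ) + 1) ^ k * deriv G (y.1 + (n + 1) * y.2)‖ * (2 * ‖(n : ℂ) + 1‖) := by
          rw [norm_smul]
          gcongr
          exact norm_fst_add_smul_snd_le n
      _ = 2 * ‖((n : ℂ) + 1) ^ (k + 1) * deriv G (y.1 + (n + 1) * y.2)‖ := by
          simp only [norm_mul, pow_succ]
          ring
      _ ≤ 2 * u n := by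
          gcongr
          exact hn _ (hU y hy n)
  refine (hasFDerivAt_tsum_of_eventually_norm_le (hu.mul_left 2) hUo hUc.isPreconnected hxU
    (fun n => hasFDerivAt_upperSum_term k n (hreg n)) hterms
    (summable_upperSum hG k hx)).congr_fderiv ?_
  have hfst := (summable_upperSum hG.deriv k hx).hasSum.smul_const (ContinuousLinearMap.fst ℂ ℂ ℂ)
  have hsnd := (summable_upperSum hG.deriv (k + 1) hx).hasSum.smul_const
    (ContinuousLinearMap.snd ℂ ℂ ℂ)
  refine .trans (tsum_congr fun n => ?_) (hfst.add hsnd).tsum_eq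
  simp only [smul_add, smul_smul, pow_succ, mul_right_comm]
lemma differentiableAt_upperSum (hG : DecaysAtImInfty G) (k : ℕ) (hτ : 0 < τ.im)
    (hreg : ∀ n : ℕ, DifferentiableAt ℂ G (z + (n + 1) * τ)) :
    DifferentiableAt ℂ (upperSum k G) (z, τ) :=
  (hasFDerivAt_upperSum hG k (x := (z, τ)) hτ hreg).differentiableAt

lemma hasDerivAt_upperSum_snd (hG : DecaysAtImInfty G) (k : ℕ) (hτ : 0 < τ.im)
    (hreg : ∀ n : ℕ, DifferentiableAt ℂ G (z + (n + 1) * τ)) :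
    HasDerivAt (fun t => upperSum k G (z, t)) (upperSum (k + 1) (deriv G) (z, τ)) τ := by
  simpa using! (hasFDerivAt_upperSum hG k (x := (z, τ)) hτ hreg).comp_hasDerivAt τ
    ((hasDerivAt_const τ z).prodMk (hasDerivAt_id τ))

lemma upperSum_zero_eq_add (hG : DecaysAtImInfty G) (hτ : 0 < τ.im) (z : ℂ) :
    upperSum 0 G (z, τ) = G (z + τ) + upperSum 0 G (z + τ, τ) := by
  rw [upperSum, (summable_upperSum hG 0 (x := (z, τ)) hτ).tsum_eq_zero_add, upperSum]
  congr 1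
  · simp
  · refine tsum_congr fun n => ?_
    simp only [pow_zero, one_mul]
    push_cast
    ring_nf

lemma upperSum_add_one (hG : ∀ w, G (w + 1) = G w) (k : ℕ) (z τ : ℂ) :
    upperSum k G (z + 1, τ) = upperSum k G (z, τ) := by
  simp only [upperSum, add_right_comm z 1, hG]
end UpperSum

section Cotangent

/-- `π cot(πw)` normalised to vanish at the cusp `i∞`. -/
def cuspCot (w : ℂ) : ℂ := π * cot (π * w) + π * I

lemma cot_neg (z : ℂ) : cot (-z) = -cot z := by
  rw [cot_eq_cos_div_sin, cot_eq_cos_div_sin, cos_neg, sin_neg, div_neg]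

lemma cot_pi_mul_add_one (w : ℂ) : cot (π * (w + 1)) = cot (π * w) := by
  rw [cot_eq_cos_div_sin, cot_eq_cos_div_sin, mul_add, mul_one, cos_add_pi, sin_add_pi,
    neg_div_neg_eq]

lemma cuspCot_add_one (w : ℂ) : cuspCot (w + 1) = cuspCot w := by
  rw [cuspCot, cuspCot, cot_pi_mul_add_one]

lemma cuspCot_neg (w : ℂ) : cuspCot (-w) = 2 * π * I - cuspCot w := by
  rw [cuspCot, cuspCot, mul_neg, cot_neg]
  ring

lemma differentiableAt_cuspCot {w : ℂ} (hw : w ∈ integerComplement) :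
    DifferentiableAt ℂ cuspCot w := by
  have hsin : sin (π * w) ≠ 0 := sin_pi_mul_ne_zero hw
  unfold cuspCot
  simp only [cot_eq_cos_div_sin]
  fun_prop (disch := exact hsin)

lemma differentiableAt_deriv_cuspCot {w : ℂ} (hw : w ∈ integerComplement) :
    DifferentiableAt ℂ (deriv cuspCot) w :=
  differentiableAt_deriv_of_isOpen isOpen_compl_range_intCast
    (fun _ => differentiableAt_cuspCot) hw

lemma mem_integerComplement_of_im_ne_zero {w : ℂ} (hw : w.im ≠ 0) : w ∈ integerComplement := by
  rintro ⟨m, rfl⟩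
  exact hw (intCast_im m)

lemma tendsto_cuspCot_comap_im_atTop : Tendsto cuspCot (comap im atTop) (𝓝 0) := by
  have hq : Tendsto (fun w : ℂ => exp (2 * π * I * w)) (comap im atTop) (𝓝 0) := by
    refine ((Function.Periodic.qParam_tendsto one_pos).mono_right nhdsWithin_le_nhds).congr
      fun w => ?_
    simp [Function.Periodic.qParam]
  have hlim : Tendsto (fun q : ℂ => π * ((q + 1) / (I * (1 - q))) + π * I) (𝓝 0) (𝓝 0) := by
    have hcont : ContinuousAt (fun q : ℂ => π * ((q + 1) / (I * (1 - q))) + π * I) 0 := by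
      fun_prop (disch := simp)
    simpa using hcont.tendsto
  refine (hlim.comp hq).congr fun w => ?_
  rw [cuspCot, cot_pi_eq_exp_ratio, Function.comp_apply]

lemma decaysAtImInfty_cuspCot : DecaysAtImInfty cuspCot where
  differentiableAt _ hw := differentiableAt_cuspCot (mem_integerComplement_of_im_ne_zero hw.ne')
  isBigO := by
    simpa using Function.Periodic.exp_decay_of_zero_at_inf one_pos
      (by simpa using cuspCot_add_one) (eventually_comap.2 <| (eventually_gt_atTop 0).mono
        fun b hb w hw => differentiableAt_cuspCot
          (mem_integerComplement_of_im_ne_zero (hw ▸ hb.ne'))) tendsto_cuspCot_comap_im_atTop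

lemma analyticAt_pi_mul_cot_sub_inv : AnalyticAt ℂ (fun w : ℂ => π * cot (π * w) - w⁻¹) 0 := by
  have hsin (w : ℂ) : HasDerivAt (fun w : ℂ => sin (π * w)) (cos (π * w) * π) w := by
    simpa using ((hasDerivAt_id w).const_mul (π : ℂ)).csin
  obtain ⟨h, hh, heq⟩ := exists_analyticAt_logDeriv_eq_inv_add
    (Differentiable.analyticAt (fun w => (hsin w).differentiableAt) 0) (by simp)
    (by simp [(hsin 0).deriv])
  refine analyticAt_of_odd_of_eventuallyEq_nhdsNE (fun w => ?_) hh (heq.mono fun w hw => ?_)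
  · rw [mul_neg, cot_neg, inv_neg]
    ring
  · simp only [logDeriv_apply, (hsin w).deriv, sub_zero] at hw
    rw [← sub_eq_iff_eq_add'] at hw
    simp only [cot_eq_cos_div_sin, ← hw]
    ring

end Cotangent

/-! ### Elliptic functions without poles -/

section Lattice

variable {τ z : ℂ}

lemma inLattice_iff_mem_closure : InLattice τ z ↔ z ∈ AddSubgroup.closure {1, τ} := by
  simp only [InLattice, AddSubgroup.mem_closure_pair, zsmul_eq_mul, mul_one, eq_comm]

lemma inLattice_add_iff {l : ℂ} (hl : InLattice τ l) : InLattice τ (z + l) ↔ InLattice τ z := by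
  rw [inLattice_iff_mem_closure] at *
  rw [inLattice_iff_mem_closure]
  exact AddSubgroup.add_mem_cancel_right _ hl

lemma inLattice_neg_iff : InLattice τ (-z) ↔ InLattice τ z := by
  simp only [inLattice_iff_mem_closure, neg_mem_iff]

lemma inLattice_one (τ : ℂ) : InLattice τ 1 := ⟨1, 0, by simp⟩

lemma inLattice_tau (τ : ℂ) : InLattice τ τ := ⟨0, 1, by simp⟩

lemma inLattice_halfp (τ : ℂ) (k : Fin 4) : InLattice τ (halfp τ k) := by
  fin_cases k
  exacts [⟨0, 0, by simp [halfp]⟩, ⟨1, 0, by simp [halfp]⟩, ⟨0, 1, by simp [halfp]⟩,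
    ⟨1, 1, by simp [halfp]⟩]

lemma not_inLattice_add_halfp_div_two (hz : ¬InLattice τ (2 * z)) (k : Fin 4) :
    ¬InLattice τ (z + halfp τ k / 2) := by
  refine fun h => hz ((inLattice_add_iff (inLattice_halfp τ k)).1 ?_)
  have hdouble : 2 * z + halfp τ k = z + halfp τ k / 2 + (z + halfp τ k / 2) := by ring
  rwa [hdouble, inLattice_add_iff h]

lemma inLattice_iff_div_im (hτ : 0 < τ.im) : InLattice τ z ↔ z.im / τ.im ∈ Set.range ((↑) : ℤ → ℝ) ∧
    z.re - z.im / τ.im * τ.re ∈ Set.range ((↑) : ℤ → ℝ) := by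
  constructor
  · rintro ⟨m, n, rfl⟩
    exact ⟨⟨n, by simp [hτ.ne']⟩, ⟨m, by simp [hτ.ne']⟩⟩
  · rintro ⟨⟨n, hn⟩, ⟨m, hm⟩⟩
    refine ⟨m, n, Complex.ext ?_ ?_⟩
    · simp [hm, hn]
    · simp [hn, hτ.ne']

lemma not_inLattice_halfp_div_two (hτ : 0 < τ.im) {k : Fin 4} (hk : k ≠ 0) :
    ¬InLattice τ (halfp τ k / 2) := by
  have hhalf : (2⁻¹ : ℝ) ∉ Set.range ((↑) : ℤ → ℝ) := by
    rintro ⟨m, hm⟩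
    have hm₂ : (2 : ℝ) * m = 1 := by rw [hm, mul_inv_cancel₀ two_ne_zero]
    have : 2 * m = 1 := mod_cast hm₂
    omega
  rw [inLattice_iff_div_im hτ]
  fin_cases k
  · exact absurd rfl hk
  · exact fun h => hhalf (by simpa [halfp] using h.2)
  · exact fun h => hhalf (by simpa [halfp, hτ.ne', div_right_comm] using h.1)
  · exact fun h => hhalf (by simpa [halfp, hτ.ne', div_right_comm] using h.1)

lemma eventually_not_inLattice (hτ : 0 < τ.im) (hz : ¬InLattice τ z) :
    ∀ᶠ x : ℂ × ℂ in 𝓝 (z, τ), ¬InLattice x.2 x.1 := by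
  have hcoord : ContinuousAt (fun x : ℂ × ℂ =>
      (x.1.im / x.2.im, x.1.re - x.1.im / x.2.im * x.2.re)) (z, τ) := by
    fun_prop (disch := exact hτ.ne')
  have hclosed := Real.isClosed_range_intCast
  rw [inLattice_iff_div_im hτ] at hz
  have him : ∀ᶠ x : ℂ × ℂ in 𝓝 (z, τ), 0 < x.2.im :=
    (continuous_im.comp continuous_snd).continuousAt.eventually_const_lt hτ
  filter_upwards [hcoord.eventually_mem ((hclosed.prod hclosed).isOpen_compl.mem_nhds hz), him]
    with x hx hxτ
  rwa [inLattice_iff_div_im hxτ]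

lemma isOpen_setOf_not_inLattice (hτ : 0 < τ.im) : IsOpen {z | ¬InLattice τ z} :=
  isOpen_iff_eventually.2 fun _ hz =>
    (Continuous.prodMk_left τ).continuousAt.eventually (eventually_not_inLattice hτ hz)

lemma isPreconnected_setOf_not_inLattice (τ : ℂ) : IsPreconnected {z | ¬InLattice τ z} := by
  have hrange : {z | InLattice τ z} = Set.range fun w : ℤ × ℤ => (w.1 : ℂ) + w.2 * τ := by
    ext z
    simp only [InLattice, Set.mem_ofPred_eq, Set.mem_range, Prod.exists, eq_comm]
  have hcountable : {z | InLattice τ z}.Countable := hrange ▸ Set.countable_range _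
  exact (hcountable.isPathConnected_compl_of_one_lt_rank
    (by rw [rank_real_complex]; exact Nat.one_lt_ofNat)).isConnected.isPreconnected

end Lattice

section Liouville

section PeriodPair

variable (L : PeriodPair)

lemma periodic_extend_lattice {α : Type*} {f : ℂ → α} (c : α) {ω : ℂ} (hω : ω ∈ L.lattice)
    (hf : ∀ z ∉ L.lattice, f (z + ω) = f z) [DecidablePred (· ∈ L.lattice)] :
    Function.Periodic (fun z => if z ∈ L.lattice then c else f z) ω := by
  intro z
  have hmem : z + ω ∈ L.lattice ↔ z ∈ L.lattice := add_mem_cancel_right hω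
  by_cases hz : z ∈ L.lattice
  · simp only [hmem, hz, if_true]
  · simp only [hmem, hz, if_false, hf z hz]

variable {E : Type*} [NormedAddCommGroup E] [NormedSpace ℂ E] {f : ℂ → E}

lemma exists_eq_const_of_differentiable_of_periodic (hf : Differentiable ℂ f)
    (hper : ∀ l ∈ L.lattice, Function.Periodic f l) : ∃ c, f = Function.const ℂ c := by
  have hb := (IsZLattice.isCompact_range_of_periodic L.lattice f hf.continuous
    fun z w hw => hper w hw z).isBounded
  exact hf.exists_eq_const_of_bounded hb

lemma exists_eq_const_of_periodic_of_eventuallyEq_nhdsNE {g : ℂ → E}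
    (h₁ : ∀ z ∉ L.lattice, f (z + L.ω₁) = f z) (h₂ : ∀ z ∉ L.lattice, f (z + L.ω₂) = f z)
    (hf : ∀ z ∉ L.lattice, DifferentiableAt ℂ f z) (hg : AnalyticAt ℂ g 0)
    (hfg : f =ᶠ[𝓝[≠] 0] g) : ∃ c, ∀ z ∉ L.lattice, f z = c := by
  classical
  set F : ℂ → E := fun z => if z ∈ L.lattice then g 0 else f z
  have hper (l : ℂ) (hl : l ∈ L.lattice) : Function.Periodic F l := by
    obtain ⟨m, n, rfl⟩ := PeriodPair.mem_lattice.1 hl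
    exact ((periodic_extend_lattice L _ L.ω₁_mem_lattice h₁).int_mul m).add_period
      ((periodic_extend_lattice L _ L.ω₂_mem_lattice h₂).int_mul n)
  have hF₀ : DifferentiableAt ℂ F 0 := by
    refine hg.differentiableAt.congr_of_eventuallyEq ?_
    filter_upwards [L.compl_lattice_sdiff_singleton_mem_nhds 0, eventually_nhdsWithin_iff.1 hfg]
      with w hw hfgw
    rcases eq_or_ne w 0 with rfl | hw₀
    · exact if_pos (zero_mem _)
    · exact (if_neg fun h => hw ⟨h, hw₀⟩).trans (hfgw hw₀)
  have hdiff : Differentiable ℂ F := fun w => by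
    by_cases hw : w ∈ L.lattice
    · have hshift : F = F ∘ fun x => x - w := funext fun x => by
        simpa using hper w hw (x - w)
      rw [hshift]
      exact DifferentiableAt.comp w (by simpa using hF₀) (by fun_prop)
    · refine (hf w hw).congr_of_eventuallyEq ?_
      filter_upwards [L.isClosed_lattice.isOpen_compl.mem_nhds hw] with x hx using if_neg hx
  obtain ⟨c, hc⟩ := exists_eq_const_of_differentiable_of_periodic L hdiff hper
  exact ⟨c, fun z hz => (if_neg hz).symm.trans (congrFun hc z)⟩

end PeriodPair

variable {τ : ℂ}

/-- The period pair `(1, τ)`, through which Mathlib's theory of `PeriodPair.lattice` and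
`PeriodPair.weierstrassP` applies to `InLattice τ` and `wp τ`. -/
def tauPair (τ : ℂ) (hτ : 0 < τ.im) : PeriodPair where
  ω₁ := 1
  ω₂ := τ
  indep := by
    refine LinearIndependent.pair_iff.2 fun s t h => ?_
    have ht : t = 0 := by simpa [hτ.ne'] using congrArg im h
    exact ⟨by simpa [ht] using congrArg re h, ht⟩

lemma mem_tauPair_lattice (hτ : 0 < τ.im) {z : ℂ} :
    z ∈ (tauPair τ hτ).lattice ↔ InLattice τ z := by
  simp only [PeriodPair.mem_lattice, InLattice, tauPair, mul_one, eq_comm]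

lemma exists_eq_const_of_add_one_of_add_tau {E : Type*} [NormedAddCommGroup E] [NormedSpace ℂ E]
    (hτ : 0 < τ.im) {f g : ℂ → E}
    (h_one : ∀ z, ¬InLattice τ z → f (z + 1) = f z)
    (h_tau : ∀ z, ¬InLattice τ z → f (z + τ) = f z)
    (hf : ∀ z, ¬InLattice τ z → DifferentiableAt ℂ f z) (hg : AnalyticAt ℂ g 0)
    (hfg : f =ᶠ[𝓝[≠] 0] g) : ∃ c, ∀ z, ¬InLattice τ z → f z = c := by
  simp only [← mem_tauPair_lattice hτ] at h_one h_tau hf ⊢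
  exact exists_eq_const_of_periodic_of_eventuallyEq_nhdsNE (tauPair τ hτ) h_one h_tau hf hg hfg

end Liouville

/-! ### The heat equation -/

section EisensteinCot

variable {τ z : ℂ}

/-- Eisenstein's series `∑_{n ∈ ℤ} π cot(π(z + nτ))`, the terms `n` and `-n` being added first; it
is the logarithmic derivative in `z` of the odd theta function, and equals `ζ(z|τ) - z η₁(τ)`. -/
def eisensteinCot (τ z : ℂ) : ℂ :=
  π * cot (π * z) + upperSum 0 cuspCot (z, τ) - upperSum 0 cuspCot (-z, τ)

lemma eisensteinCot_neg (τ z : ℂ) : eisensteinCot τ (-z) = -eisensteinCot τ z := by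
  rw [eisensteinCot, eisensteinCot, mul_neg, cot_neg, neg_neg]
  ring

lemma eisensteinCot_add_one (τ z : ℂ) : eisensteinCot τ (z + 1) = eisensteinCot τ z := by
  have hneg := upperSum_add_one cuspCot_add_one 0 (-(z + 1)) τ
  rw [neg_add, neg_add_cancel_right] at hneg
  rw [eisensteinCot, eisensteinCot, cot_pi_mul_add_one, upperSum_add_one cuspCot_add_one, neg_add,
    hneg]

lemma eisensteinCot_add_tau (hτ : 0 < τ.im) (z : ℂ) :
    eisensteinCot τ (z + τ) = eisensteinCot τ z - 2 * π * I := by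
  have hpos := upperSum_zero_eq_add decaysAtImInfty_cuspCot hτ z
  have hneg := upperSum_zero_eq_add decaysAtImInfty_cuspCot hτ (-(z + τ))
  rw [neg_add, neg_add_cancel_right, cuspCot_neg] at hneg
  simp only [eisensteinCot, neg_add, hpos, hneg, cuspCot]
  ring

lemma add_natCast_mul_mem_integerComplement (hτ : 0 < τ.im) (hz : InLattice τ z → z = 0) (n : ℕ) :
    z + (n + 1) * τ ∈ integerComplement := by
  rintro ⟨m, hm⟩
  obtain rfl := hz ⟨m, -(n + 1), by push_cast; linear_combination -hm⟩
  have him : (n + 1 : ℝ) * τ.im = 0 := by simpa using (congrArg im hm).symm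
  exact absurd him (by positivity)

lemma isOpen_setOf_inLattice_imp (hτ : 0 < τ.im) : IsOpen {z | InLattice τ z → z = 0} := by
  have hset : {z | InLattice τ z → z = 0} = (((tauPair τ hτ).lattice : Set ℂ) \ {0})ᶜ := by
    ext z
    simp only [Set.mem_ofPred_eq, Set.mem_compl_iff, Set.mem_sdiff, SetLike.mem_coe,
      mem_tauPair_lattice hτ, Set.mem_singleton_iff, not_and_not_right]
  exact hset ▸ (tauPair τ hτ).isOpen_compl_lattice_sdiff

lemma differentiableAt_cuspCot_add_natCast_mul (hτ : 0 < τ.im) (hz : InLattice τ z → z = 0)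
    (n : ℕ) : DifferentiableAt ℂ cuspCot (z + (n + 1) * τ) :=
  differentiableAt_cuspCot (add_natCast_mul_mem_integerComplement hτ hz n)

lemma inLattice_neg_imp (hz : InLattice τ z → z = 0) : InLattice τ (-z) → -z = 0 := by
  rwa [inLattice_neg_iff, neg_eq_zero]

lemma deriv_eisensteinCot_tau (hτ : 0 < τ.im) (hz : InLattice τ z → z = 0) :
    deriv (fun t => eisensteinCot t z) τ =
      upperSum 1 (deriv cuspCot) (z, τ) - upperSum 1 (deriv cuspCot) (-z, τ) :=
  (((hasDerivAt_upperSum_snd decaysAtImInfty_cuspCot 0 hτ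
    (differentiableAt_cuspCot_add_natCast_mul hτ hz)).const_add _).sub
    (hasDerivAt_upperSum_snd decaysAtImInfty_cuspCot 0 hτ
      (differentiableAt_cuspCot_add_natCast_mul hτ (inLattice_neg_imp hz)))).deriv

lemma differentiableAt_deriv_eisensteinCot_tau (hτ : 0 < τ.im) (hz : InLattice τ z → z = 0) :
    DifferentiableAt ℂ (fun z => deriv (fun t => eisensteinCot t z) τ) z := by
  have hsum {w : ℂ} (hw : InLattice τ w → w = 0) :
      DifferentiableAt ℂ (upperSum 1 (deriv cuspCot)) (w, τ) :=
    differentiableAt_upperSum decaysAtImInfty_cuspCot.deriv 1 hτ fun n =>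
      differentiableAt_deriv_cuspCot (add_natCast_mul_mem_integerComplement hτ hw n)
  have heq : (fun z => deriv (fun t => eisensteinCot t z) τ) =ᶠ[𝓝 z] fun z =>
      upperSum 1 (deriv cuspCot) (z, τ) - upperSum 1 (deriv cuspCot) (-z, τ) := by
    filter_upwards [(isOpen_setOf_inLattice_imp hτ).mem_nhds hz] with w hw
      using deriv_eisensteinCot_tau hτ hw
  refine .congr_of_eventuallyEq (.sub ?_ ?_) heq
  · exact (hsum hz).comp z (by fun_prop : DifferentiableAt ℂ (fun z => (z, τ)) z)
  · exact (hsum (inLattice_neg_imp hz)).comp z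
      (by fun_prop : DifferentiableAt ℂ (fun z => (-z, τ)) z)

lemma analyticAt_deriv_eisensteinCot_tau (hτ : 0 < τ.im) :
    AnalyticAt ℂ (fun z => deriv (fun t => eisensteinCot t z) τ) 0 := by
  refine analyticAt_iff_eventually_differentiableAt.2 ?_
  filter_upwards [(isOpen_setOf_inLattice_imp hτ).mem_nhds (fun _ => rfl)] with z hz
    using differentiableAt_deriv_eisensteinCot_tau hτ hz

lemma analyticAt_eisensteinCot_sub_inv (hτ : 0 < τ.im) :
    AnalyticAt ℂ (fun z => eisensteinCot τ z - z⁻¹) 0 := by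
  have hsum {w : ℂ} (hw : InLattice τ w → w = 0) :
      DifferentiableAt ℂ (upperSum 0 cuspCot) (w, τ) :=
    differentiableAt_upperSum decaysAtImInfty_cuspCot 0 hτ
      (differentiableAt_cuspCot_add_natCast_mul hτ hw)
  have htail : AnalyticAt ℂ
      (fun z => upperSum 0 cuspCot (z, τ) - upperSum 0 cuspCot (-z, τ)) 0 := by
    refine analyticAt_iff_eventually_differentiableAt.2 ?_
    filter_upwards [(isOpen_setOf_inLattice_imp hτ).mem_nhds (fun _ => rfl)] with z hz
    exact ((hsum hz).comp z (by fun_prop : DifferentiableAt ℂ (fun z => (z, τ)) z)).sub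
      ((hsum (inLattice_neg_imp hz)).comp z
        (by fun_prop : DifferentiableAt ℂ (fun z => (-z, τ)) z))
  refine (analyticAt_pi_mul_cot_sub_inv.add htail).congr (.of_forall fun z => ?_)
  simp only [eisensteinCot, Pi.add_apply]
  ring

end EisensteinCot

section EisensteinCotDeriv

variable {τ z : ℂ}

lemma differentiableAt_uncurry_eisensteinCot (hτ : 0 < τ.im) (hz : ¬InLattice τ z) :
    DifferentiableAt ℂ (Function.uncurry eisensteinCot) (τ, z) := by
  have hzΛ : InLattice τ z → z = 0 := fun h => absurd h hz
  have hz_int : z ∈ integerComplement := fun ⟨m, hm⟩ => hz ⟨m, 0, by simp [hm]⟩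
  have hcot : DifferentiableAt ℂ (fun x : ℂ × ℂ => cuspCot x.2 - π * I) (τ, z) :=
    (DifferentiableAt.comp (f := Prod.snd) (τ, z) (differentiableAt_cuspCot hz_int)
      differentiableAt_snd).sub_const _
  have hsum {w : ℂ} (hw : InLattice τ w → w = 0) :=
    differentiableAt_upperSum decaysAtImInfty_cuspCot 0 hτ
      (differentiableAt_cuspCot_add_natCast_mul hτ hw)
  have hpos : DifferentiableAt ℂ (fun x : ℂ × ℂ => upperSum 0 cuspCot (x.2, x.1)) (τ, z) :=
    (hsum hzΛ).comp (τ, z) (f := fun x : ℂ × ℂ => (x.2, x.1)) (by fun_prop)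
  have hneg : DifferentiableAt ℂ (fun x : ℂ × ℂ => upperSum 0 cuspCot (-x.2, x.1)) (τ, z) :=
    (hsum (inLattice_neg_imp hzΛ)).comp (τ, z) (f := fun x : ℂ × ℂ => (-x.2, x.1)) (by fun_prop)
  refine ((hcot.add hpos).sub hneg).congr_of_eventuallyEq (.of_forall fun x => ?_)
  simp only [Function.uncurry, eisensteinCot, cuspCot, Pi.add_apply, Pi.sub_apply,
    add_sub_cancel_right]

lemma hasDerivAt_eisensteinCot_comp {f : ℂ → ℂ} {f' : ℂ} (hτ : 0 < τ.im)
    (hz : ¬InLattice τ (f τ)) (hf : HasDerivAt f f' τ) :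
    HasDerivAt (fun t => eisensteinCot t (f t))
      (deriv (fun t => eisensteinCot t (f τ)) τ + f' * deriv (eisensteinCot τ) (f τ)) τ := by
  simpa only [id, one_mul, smul_eq_mul] using hasDerivAt_comp_of_differentiableAt_uncurry
    (differentiableAt_uncurry_eisensteinCot hτ hz) (hasDerivAt_id τ) hf

lemma differentiableAt_eisensteinCot (hτ : 0 < τ.im) (hz : ¬InLattice τ z) :
    DifferentiableAt ℂ (eisensteinCot τ) z :=
  (differentiableAt_uncurry_eisensteinCot hτ hz).comp z
    (by fun_prop : DifferentiableAt ℂ (fun w => (τ, w)) z)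

lemma differentiableAt_deriv_eisensteinCot (hτ : 0 < τ.im) (hz : ¬InLattice τ z) :
    DifferentiableAt ℂ (deriv (eisensteinCot τ)) z :=
  differentiableAt_deriv_of_isOpen (isOpen_setOf_not_inLattice hτ)
    (fun _ => differentiableAt_eisensteinCot hτ) hz

lemma deriv_eisensteinCot_add_one (τ z : ℂ) :
    deriv (eisensteinCot τ) (z + 1) = deriv (eisensteinCot τ) z := by
  rw [← deriv_comp_add_const]
  simp only [eisensteinCot_add_one]

lemma deriv_eisensteinCot_add_tau (hτ : 0 < τ.im) (z : ℂ) :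
    deriv (eisensteinCot τ) (z + τ) = deriv (eisensteinCot τ) z := by
  rw [← deriv_comp_add_const]
  simp only [eisensteinCot_add_tau hτ, deriv_sub_const]

lemma deriv_eisensteinCot_neg (τ z : ℂ) :
    deriv (eisensteinCot τ) (-z) = deriv (eisensteinCot τ) z := by
  have hchain := deriv_comp_neg (eisensteinCot τ) z
  simp only [eisensteinCot_neg, deriv.fun_neg] at hchain
  exact (neg_inj.1 hchain).symm

lemma deriv_eisensteinCot_tau_add_tau (hτ : 0 < τ.im) (hz : ¬InLattice τ z) :
    deriv (fun t => eisensteinCot t (z + τ)) τ =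
      deriv (fun t => eisensteinCot t z) τ - deriv (eisensteinCot τ) z := by
  have hzτ : ¬InLattice τ (z + τ) := by rwa [inLattice_add_iff (inLattice_tau τ)]
  have hmoving := hasDerivAt_eisensteinCot_comp hτ hzτ ((hasDerivAt_id τ).const_add z)
  have hfixed := (hasDerivAt_eisensteinCot_comp hτ hz (hasDerivAt_const τ z)).sub_const (2 * π * I)
  have heq : (fun t => eisensteinCot t (z + t)) =ᶠ[𝓝 τ]
      fun t => eisensteinCot t z - 2 * π * I := by
    filter_upwards [continuous_im.continuousAt.eventually_const_lt hτ] with t ht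
      using eisensteinCot_add_tau ht z
  have hunique := (hmoving.congr_of_eventuallyEq heq.symm).unique hfixed
  simp only [one_mul, zero_mul, add_zero, deriv_eisensteinCot_add_tau hτ] at hunique
  exact eq_sub_of_add_eq hunique

end EisensteinCotDeriv

section HeatEquation

variable {τ z : ℂ}

/-- The defect `4πi ∂_τ Z - ∂_z (∂_z Z + Z²)` in the heat equation for `Z = ∂_z log θ`, where `θ`
is the odd theta function. -/
def heatDefect (τ z : ℂ) : ℂ :=
  4 * π * I * deriv (fun t => eisensteinCot t z) τ -
    deriv (fun w => deriv (eisensteinCot τ) w + eisensteinCot τ w ^ 2) z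

lemma heatDefect_add_one (τ z : ℂ) : heatDefect τ (z + 1) = heatDefect τ z := by
  simp only [heatDefect, eisensteinCot_add_one, ← deriv_comp_add_const _ (1 : ℂ)]

lemma heatDefect_neg (τ z : ℂ) : heatDefect τ (-z) = -heatDefect τ z := by
  have heven := deriv_comp_neg (fun w => deriv (eisensteinCot τ) w + eisensteinCot τ w ^ 2) z
  simp only [deriv_eisensteinCot_neg, eisensteinCot_neg, neg_sq] at heven
  simp only [heatDefect, eisensteinCot_neg, deriv.fun_neg]
  linear_combination -heven

lemma differentiableAt_deriv_eisensteinCot_add_sq (hτ : 0 < τ.im) (hz : ¬InLattice τ z) :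
    DifferentiableAt ℂ (fun w => deriv (eisensteinCot τ) w + eisensteinCot τ w ^ 2) z :=
  (differentiableAt_deriv_eisensteinCot hτ hz).add ((differentiableAt_eisensteinCot hτ hz).pow 2)

lemma heatDefect_add_tau (hτ : 0 < τ.im) (hz : ¬InLattice τ z) :
    heatDefect τ (z + τ) = heatDefect τ z := by
  have hshift : (fun w => deriv (eisensteinCot τ) (w + τ) + eisensteinCot τ (w + τ) ^ 2) =
      fun w => deriv (eisensteinCot τ) w + eisensteinCot τ w ^ 2 -
        (4 * π * I * eisensteinCot τ w - (2 * π * I) ^ 2) := by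
    ext w
    rw [deriv_eisensteinCot_add_tau hτ, eisensteinCot_add_tau hτ]
    ring
  have hderiv := (differentiableAt_deriv_eisensteinCot_add_sq hτ hz).hasDerivAt.fun_sub
    (((differentiableAt_eisensteinCot hτ hz).hasDerivAt.const_mul (4 * π * I)).sub_const
      ((2 * π * I) ^ 2))
  rw [heatDefect, deriv_eisensteinCot_tau_add_tau hτ hz, ← deriv_comp_add_const, hshift,
    hderiv.deriv, heatDefect]
  ring

lemma differentiableAt_heatDefect (hτ : 0 < τ.im) (hz : ¬InLattice τ z) :
    DifferentiableAt ℂ (heatDefect τ) z :=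
  ((differentiableAt_deriv_eisensteinCot_tau hτ fun h => absurd h hz).const_mul _).sub
    (differentiableAt_deriv_of_isOpen (isOpen_setOf_not_inLattice hτ)
      (fun _ => differentiableAt_deriv_eisensteinCot_add_sq hτ) hz)

lemma exists_analyticAt_heatDefect (hτ : 0 < τ.im) :
    ∃ g, AnalyticAt ℂ g 0 ∧ heatDefect τ =ᶠ[𝓝[≠] 0] g := by
  have h₀ : eisensteinCot τ 0 = 0 := by simpa [self_eq_neg] using eisensteinCot_neg τ 0
  obtain ⟨g, hg, hgeq⟩ := exists_analyticAt_deriv_add_sq h₀ (analyticAt_eisensteinCot_sub_inv hτ)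
  refine ⟨fun z => 4 * π * I * deriv (fun t => eisensteinCot t z) τ - deriv g z,
    (analyticAt_const.mul (analyticAt_deriv_eisensteinCot_tau hτ)).sub hg.deriv, ?_⟩
  filter_upwards [hgeq.nhdsNE_deriv] with z hz
  rw [heatDefect, hz]

lemma heatDefect_eq_zero (hτ : 0 < τ.im) (hz : ¬InLattice τ z) : heatDefect τ z = 0 := by
  obtain ⟨g, hg, hgeq⟩ := exists_analyticAt_heatDefect hτ
  obtain ⟨c, hc⟩ := exists_eq_const_of_add_one_of_add_tau hτ (fun z _ => heatDefect_add_one τ z)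
    (fun _ => heatDefect_add_tau hτ) (fun _ => differentiableAt_heatDefect hτ) hg hgeq
  have hneg : ¬InLattice τ (-z) := by rwa [inLattice_neg_iff]
  have hodd : c = -c := by simpa only [hc z hz, hc (-z) hneg] using heatDefect_neg τ z
  rw [hc z hz, self_eq_neg.1 hodd]

lemma deriv_eisensteinCot_tau_eq (hτ : 0 < τ.im) (hz : ¬InLattice τ z) :
    4 * π * I * deriv (fun t => eisensteinCot t z) τ =
      deriv (deriv (eisensteinCot τ)) z + 2 * eisensteinCot τ z * deriv (eisensteinCot τ) z := by
  have hderiv := (differentiableAt_deriv_eisensteinCot hτ hz).hasDerivAt.add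
    ((differentiableAt_eisensteinCot hτ hz).hasDerivAt.pow 2)
  have hdefect := heatDefect_eq_zero hτ hz
  rw [heatDefect, sub_eq_zero] at hdefect
  refine hdefect.trans (hderiv.deriv.trans ?_)
  simp

end HeatEquation

/-! ### The Weierstrass functions -/

section WeierstrassP

variable {τ z : ℂ}

lemma wp_eq_weierstrassP (hτ : 0 < τ.im) : wp τ = (tauPair τ hτ).weierstrassP := by
  ext z
  set e := (tauPair τ hτ).latticeEquivProd.symm
  have he (w : ℤ × ℤ) : (e w : ℂ) = w.1 + w.2 * τ := by
    rw [PeriodPair.latticeEquiv_symm_apply]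
    simp [tauPair]
  have he₀ (w : ℤ × ℤ) : (e w : ℂ) = 0 ↔ w = 0 := by
    rw [ZeroMemClass.coe_eq_zero, LinearEquiv.map_eq_zero_iff]
  have hsum := tsum_subtype {w : ℤ × ℤ | w ≠ 0} fun w =>
    ((z - ((w.1 : ℂ) + (w.2 : ℂ) * τ))⁻¹ ^ 2 - ((w.1 : ℂ) + (w.2 : ℂ) * τ)⁻¹ ^ 2)
  rw [← (tauPair τ hτ).weierstrassPExcept_add 0 z, wp, add_comm, PeriodPair.weierstrassPExcept,
    ← e.toEquiv.tsum_eq]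
  congr 1
  · refine hsum.trans (tsum_congr fun w => ?_)
    by_cases hw : w = 0
    · simp [hw]
    · have hew : (e w : ℂ) ≠ 0 := mt (he₀ w).1 hw
      simp [hw, hew, ← he]
  · simp

lemma analyticAt_wp (hτ : 0 < τ.im) (hz : ¬InLattice τ z) : AnalyticAt ℂ (wp τ) z := by
  rw [← mem_tauPair_lattice hτ] at hz
  exact wp_eq_weierstrassP hτ ▸ (tauPair τ hτ).analyticOnNhd_weierstrassP z hz

lemma periodic_wp (hτ : 0 < τ.im) {l : ℂ} (hl : InLattice τ l) : Function.Periodic (wp τ) l := by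
  rw [wp_eq_weierstrassP hτ]
  exact (tauPair τ hτ).periodic_weierstrassP ⟨l, (mem_tauPair_lattice hτ).2 hl⟩

lemma analyticAt_wp_sub_inv_sq (hτ : 0 < τ.im) :
    AnalyticAt ℂ (fun z => wp τ z - (z ^ 2)⁻¹) 0 := by
  refine ((tauPair τ hτ).analyticAt_weierstrassPExcept 0).congr (.of_forall fun z => ?_)
  simp [wp_eq_weierstrassP hτ, ← (tauPair τ hτ).weierstrassPExcept_add 0 z]

end WeierstrassP

section Duplication

variable {τ z : ℂ}

lemma sum_add_half_add_halfp_div_two {M : Type*} [AddCommMonoid M] {f : ℂ → M}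
    (hf : Function.Periodic f 1) (τ z : ℂ) :
    ∑ k, f (z + 1 / 2 + halfp τ k / 2) = ∑ k, f (z + halfp τ k / 2) := by
  have h₀ : z + 1 / 2 + 0 / 2 = z + 1 / 2 := by ring
  have h₁ : z + 1 / 2 + 1 / 2 = z + 0 / 2 + 1 := by ring
  have h₂ : z + 1 / 2 + τ / 2 = z + (1 + τ) / 2 := by ring
  have h₃ : z + 1 / 2 + (1 + τ) / 2 = z + τ / 2 + 1 := by ring
  simp only [Fin.sum_univ_four, halfp, Matrix.cons_val, h₀, h₁, h₂, h₃, hf _]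
  abel

lemma sum_add_half_tau_add_halfp_div_two {M : Type*} [AddCommMonoid M] {f : ℂ → M}
    (hf : Function.Periodic f τ) (z : ℂ) :
    ∑ k, f (z + τ / 2 + halfp τ k / 2) = ∑ k, f (z + halfp τ k / 2) := by
  have h₀ : z + τ / 2 + 0 / 2 = z + τ / 2 := by ring
  have h₁ : z + τ / 2 + 1 / 2 = z + (1 + τ) / 2 := by ring
  have h₂ : z + τ / 2 + τ / 2 = z + 0 / 2 + τ := by ring
  have h₃ : z + τ / 2 + (1 + τ) / 2 = z + 1 / 2 + τ := by ring
  simp only [Fin.sum_univ_four, halfp, Matrix.cons_val, h₀, h₁, h₂, h₃, hf _]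
  abel

lemma analyticAt_sum_wp_sub (hτ : 0 < τ.im) :
    AnalyticAt ℂ (fun u => ∑ k, wp τ (u / 2 + halfp τ k / 2) - 4 * wp τ u) 0 := by
  have hpole : AnalyticAt ℂ (fun u => wp τ (u / 2) - ((u / 2) ^ 2)⁻¹) 0 :=
    (analyticAt_wp_sub_inv_sq hτ).comp_of_eq (f := fun u => u / 2) (by fun_prop) (zero_div 2)
  have hreg (k : Fin 3) : AnalyticAt ℂ (fun u => wp τ (u / 2 + halfp τ k.succ / 2)) 0 :=
    (analyticAt_wp hτ (not_inLattice_halfp_div_two hτ k.succ_ne_zero)).comp_of_eq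
      (f := fun u => u / 2 + halfp τ k.succ / 2) (by fun_prop) (by simp)
  have hsplit (u : ℂ) : ∑ k, wp τ (u / 2 + halfp τ k / 2) =
      wp τ (u / 2) + ∑ k : Fin 3, wp τ (u / 2 + halfp τ k.succ / 2) := by
    have hhalfp₀ : halfp τ 0 / 2 = 0 := zero_div 2
    rw [Fin.sum_univ_succ, hhalfp₀, add_zero]
  refine ((hpole.add (Finset.univ.analyticAt_fun_sum fun k _ => hreg k)).sub
    ((analyticAt_const (v := 4)).mul (analyticAt_wp_sub_inv_sq hτ))).congr (.of_forall fun u => ?_)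
  simp only [Pi.add_apply, Pi.sub_apply, Pi.mul_apply, hsplit]
  ring

lemma hasDerivAt_sum_wp_sub (hτ : 0 < τ.im) {u : ℂ} (hu : ¬InLattice τ u) :
    HasDerivAt (fun u => ∑ k, wp τ (u / 2 + halfp τ k / 2) - 4 * wp τ u)
      (∑ k, wpd τ (u / 2 + halfp τ k / 2) * (1 / 2) - 4 * wpd τ u) u := by
  have hu₂ : ¬InLattice τ (2 * (u / 2)) := by rwa [mul_div_cancel₀ u two_ne_zero]
  refine (HasDerivAt.fun_sum fun k _ => ?_).fun_sub
    ((analyticAt_wp hτ hu).differentiableAt.hasDerivAt.const_mul 4)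
  have hk := not_inLattice_add_halfp_div_two hu₂ k
  exact (analyticAt_wp hτ hk).differentiableAt.hasDerivAt.comp u
    (((hasDerivAt_id u).div_const 2).add_const _)

lemma exists_sum_wp_sub_eq_const (hτ : 0 < τ.im) :
    ∃ c, ∀ u, ¬InLattice τ u → ∑ k, wp τ (u / 2 + halfp τ k / 2) - 4 * wp τ u = c := by
  have h_one := periodic_wp hτ (inLattice_one τ)
  have h_tau := periodic_wp hτ (inLattice_tau τ)
  refine exists_eq_const_of_add_one_of_add_tau hτ (fun u _ => ?_) (fun u _ => ?_)
    (fun u hu => (hasDerivAt_sum_wp_sub hτ hu).differentiableAt) (analyticAt_sum_wp_sub hτ) .rfl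
  · simp only [add_div, sum_add_half_add_halfp_div_two h_one, h_one u]
  · simp only [add_div, sum_add_half_tau_add_halfp_div_two h_tau, h_tau u]

lemma sum_wpd_add_halfp_div_two (hτ : 0 < τ.im) (hz : ¬InLattice τ (2 * z)) :
    ∑ k, wpd τ (z + halfp τ k / 2) = 8 * wpd τ (2 * z) := by
  obtain ⟨c, hc⟩ := exists_sum_wp_sub_eq_const hτ
  have hzero : HasDerivAt (fun u => ∑ k, wp τ (u / 2 + halfp τ k / 2) - 4 * wp τ u) 0 (2 * z) := by
    refine (hasDerivAt_const (2 * z) c).congr_of_eventuallyEq ?_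
    filter_upwards [(isOpen_setOf_not_inLattice hτ).mem_nhds hz] with u hu using hc u hu
  have hunique := (hasDerivAt_sum_wp_sub hτ hz).unique hzero
  rw [mul_div_cancel_left₀ z two_ne_zero, ← Finset.sum_mul] at hunique
  linear_combination 2 * hunique

lemma sum_mul_wpd_add_halfp_div_two (hτ : 0 < τ.im) (hz : ¬InLattice τ (2 * z)) (n : Fin 4 → ℂ) :
    ∑ k, 1 / 2 * (n k + 1 / 2) ^ 2 * wpd τ (z + halfp τ k / 2) =
      1 / 2 * ∑ k, n k * (n k + 1) * wpd τ (z + halfp τ k / 2) + wpd τ (2 * z) := by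
  have hterm (k : Fin 4) : 1 / 2 * (n k + 1 / 2) ^ 2 * wpd τ (z + halfp τ k / 2) =
      1 / 2 * (n k * (n k + 1) * wpd τ (z + halfp τ k / 2)) +
        1 / 8 * wpd τ (z + halfp τ k / 2) := by ring
  simp only [hterm, Finset.sum_add_distrib, ← Finset.mul_sum, sum_wpd_add_halfp_div_two hτ hz]
  ring

end Duplication

section Zeta

variable {zeta : ℂ → ℂ → ℂ} {eta1 : ℂ → ℂ} {τ z : ℂ}

lemma exists_deriv_eisensteinCot_add_wp_eq_const (hτ : 0 < τ.im) :
    ∃ c, ∀ z, ¬InLattice τ z → deriv (eisensteinCot τ) z + wp τ z = c := by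
  have hlaurent : AnalyticAt ℂ
      (fun z => deriv (fun z => eisensteinCot τ z - z⁻¹) z + (wp τ z - (z ^ 2)⁻¹)) 0 :=
    (analyticAt_eisensteinCot_sub_inv hτ).deriv.add (analyticAt_wp_sub_inv_sq hτ)
  refine exists_eq_const_of_add_one_of_add_tau hτ (fun z _ => ?_) (fun z _ => ?_) (fun z hz => ?_)
    hlaurent ?_
  · rw [deriv_eisensteinCot_add_one, periodic_wp hτ (inLattice_one τ)]
  · rw [deriv_eisensteinCot_add_tau hτ, periodic_wp hτ (inLattice_tau τ)]
  · exact (differentiableAt_deriv_eisensteinCot hτ hz).add (analyticAt_wp hτ hz).differentiableAt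
  · filter_upwards [deriv_eventuallyEq_of_analyticAt_sub_inv (analyticAt_eisensteinCot_sub_inv hτ)]
      with z hz
    rw [hz]
    ring

lemma exists_zeta_eq_eisensteinCot_sub (hzeta : IsWeierstrassZeta zeta) (hτ : 0 < τ.im) :
    ∃ c, ∀ z, ¬InLattice τ z →
      zeta τ z = eisensteinCot τ z - c * z ∧ deriv (eisensteinCot τ) z = c - wp τ z := by
  obtain ⟨hodd, hderiv, -⟩ := hzeta τ hτ
  obtain ⟨c, hc⟩ := exists_deriv_eisensteinCot_add_wp_eq_const hτ
  have hd (z : ℂ) (hz : ¬InLattice τ z) :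
      HasDerivAt (fun z => zeta τ z - eisensteinCot τ z + c * z) 0 z := by
    refine (((hderiv z hz).sub (differentiableAt_eisensteinCot hτ hz).hasDerivAt).add
      ((hasDerivAt_id z).const_mul c)).congr_deriv ?_
    linear_combination -hc z hz
  obtain ⟨a, ha⟩ := (isOpen_setOf_not_inLattice hτ).exists_is_const_of_deriv_eq_zero
    (isPreconnected_setOf_not_inLattice τ)
    (fun z hz => (hd z hz).differentiableAt.differentiableWithinAt) fun z hz => (hd z hz).deriv
  refine ⟨c, fun z hz => ⟨?_, eq_sub_of_add_eq (hc z hz)⟩⟩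
  have hpos := ha z hz
  have hneg := ha (-z) (mt inLattice_neg_iff.1 hz)
  rw [hodd, eisensteinCot_neg] at hneg
  linear_combination (hpos - hneg) / 2

lemma zeta_eq_eisensteinCot_add (hzeta : IsWeierstrassZeta zeta) (heta1 : IsEta1 zeta eta1)
    (hτ : 0 < τ.im) (hz : ¬InLattice τ z) :
    zeta τ z = eisensteinCot τ z + z * eta1 τ ∧
      deriv (eisensteinCot τ) z = -(wp τ z + eta1 τ) := by
  obtain ⟨c, hc⟩ := exists_zeta_eq_eisensteinCot_sub hzeta hτ
  have hz_one : ¬InLattice τ (z + 1) := by rwa [inLattice_add_iff (inLattice_one τ)]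
  have hη : eta1 τ = -c := by
    rw [heta1 τ hτ z hz, (hc z hz).1, (hc _ hz_one).1, eisensteinCot_add_one]
    ring
  rw [(hc z hz).1, (hc z hz).2, hη]
  exact ⟨by ring, by ring⟩

lemma deriv_deriv_eisensteinCot (hτ : 0 < τ.im) (hz : ¬InLattice τ z) :
    deriv (deriv (eisensteinCot τ)) z = -wpd τ z := by
  obtain ⟨c, hc⟩ := exists_deriv_eisensteinCot_add_wp_eq_const hτ
  have heq : deriv (eisensteinCot τ) =ᶠ[𝓝 z] fun w => c - wp τ w := by
    filter_upwards [(isOpen_setOf_not_inLattice hτ).mem_nhds hz] with w hw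
      using eq_sub_of_add_eq (hc w hw)
  rw [heq.deriv_eq, deriv_const_sub, wpd]

lemma deriv_eisensteinCot_tau_eq_wpd_add (hzeta : IsWeierstrassZeta zeta)
    (heta1 : IsEta1 zeta eta1) (hτ : 0 < τ.im) (hz : ¬InLattice τ z) :
    deriv (fun t => eisensteinCot t z) τ =
      I / (4 * π) * (wpd τ z + 2 * (zeta τ z - z * eta1 τ) * (wp τ z + eta1 τ)) := by
  have hheat := deriv_eisensteinCot_tau_eq hτ hz
  obtain ⟨hZ, hZ'⟩ := zeta_eq_eisensteinCot_add hzeta heta1 hτ hz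
  rw [deriv_deriv_eisensteinCot hτ hz, hZ'] at hheat
  have hπ : (π : ℂ) ≠ 0 := ofReal_ne_zero.2 Real.pi_ne_zero
  rw [hZ, add_sub_cancel_right]
  field_simp
  linear_combination (-I) * hheat + 4 * π * deriv (fun t => eisensteinCot t z) τ * I_sq

lemma hasDerivAt_zeta_sub_mul_eta1 (hzeta : IsWeierstrassZeta zeta) (heta1 : IsEta1 zeta eta1)
    (hτ : 0 < τ.im) {f : ℂ → ℂ} {f' : ℂ} (hf : HasDerivAt f f' τ) (hfτ : ¬InLattice τ (f τ)) :
    HasDerivAt (fun t => zeta t (f t) - f t * eta1 t)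
      (I / (4 * π) * (wpd τ (f τ) +
          2 * (zeta τ (f τ) - f τ * eta1 τ) * (wp τ (f τ) + eta1 τ)) -
        f' * (wp τ (f τ) + eta1 τ)) τ := by
  have hoff : ∀ᶠ t in 𝓝 τ, ¬InLattice t (f t) :=
    (hf.continuousAt.prodMk continuousAt_id).eventually (eventually_not_inLattice hτ hfτ)
  have heq : (fun t => zeta t (f t) - f t * eta1 t) =ᶠ[𝓝 τ] fun t => eisensteinCot t (f t) := by
    filter_upwards [hoff, continuous_im.continuousAt.eventually_const_lt hτ] with t ht ht_im
    rw [(zeta_eq_eisensteinCot_add hzeta heta1 ht_im ht).1, add_sub_cancel_right]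
  refine ((hasDerivAt_eisensteinCot_comp hτ hfτ hf).congr_of_eventuallyEq heq).congr_deriv ?_
  rw [deriv_eisensteinCot_tau_eq_wpd_add hzeta heta1 hτ hfτ,
    (zeta_eq_eisensteinCot_add hzeta heta1 hτ hfτ).2]
  ring

end Zeta

theorem elliptic_PVI_implies_hamiltonian_system_general
    (n : Fin 4 → ℂ) (zeta : ℂ → ℂ → ℂ) (eta1 : ℂ → ℂ)
    (hzeta : IsWeierstrassZeta zeta) (heta1 : IsEta1 zeta eta1)
    (V : Set ℂ) (hVopen : IsOpen V) (hVH : ∀ τ ∈ V, 0 < τ.im)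
    (p : ℂ → ℂ) (hpdiff : DifferentiableOn ℂ p V)
    (hreg : ∀ τ ∈ V, ¬InLattice τ (2 * p τ))
    (hell : ∀ τ ∈ V, HasDerivAt (deriv p)
      (-1 / (4 * (π : ℂ) ^ 2) *
        ∑ k, 1 / 2 * (n k + 1 / 2) ^ 2 * wpd τ (p τ + halfp τ k / 2)) τ)
    (A : ℂ → ℂ)
    (hA : ∀ τ, A τ = 2 * π * I * deriv p τ + 1 / 2 * (zeta τ (2 * p τ) - 2 * p τ * eta1 τ)) :
    HamSystem n zeta eta1 V p A := by
  intro τ hτV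
  have hπ : (π : ℂ) ≠ 0 := ofReal_ne_zero.2 Real.pi_ne_zero
  have hp := (hpdiff.differentiableAt (hVopen.mem_nhds hτV)).hasDerivAt
  have hZ := hasDerivAt_zeta_sub_mul_eta1 hzeta heta1 (hVH τ hτV) (hp.const_mul 2) (hreg τ hτV)
  have hA' := (((hell τ hτV).const_mul (2 * π * I)).add
    (hZ.const_mul (1 / 2))).congr_of_eventuallyEq (.of_forall hA)
  refine ⟨hp.congr_deriv ?_, hA'.congr_deriv ?_⟩
  · rw [hA]
    field_simp
    linear_combination 4 * deriv p τ * π * I_sq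
  · rw [sum_mul_wpd_add_halfp_div_two (hVH τ hτV) (hreg τ hτV), hA]
    field_simp
    linear_combination -8 * π * (wp τ (2 * p τ) + eta1 τ) * deriv p τ * I_sq

end

/-- Theorem 4.1, converse direction: a solution of the elliptic form of
Painlevé VI with `α_k = (1/2)(n_k + 1/2)²`, together with
`A(τ) = 2πi p′(τ) + (1/2)(ζ(2p|τ) - 2p η₁(τ))`, solves the Hamiltonian system. -/
theorem elliptic_PVI_implies_hamiltonian_system
    (n : Fin 4 → ℂ) (zeta : ℂ → ℂ → ℂ) (eta1 : ℂ → ℂ)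
    (hzeta : IsWeierstrassZeta zeta) (heta1 : IsEta1 zeta eta1)
    (V : Set ℂ) (hVopen : IsOpen V) (hVconn : IsConnected V)
    (hVH : ∀ τ ∈ V, 0 < τ.im)
    (p : ℂ → ℂ) (hpdiff : DifferentiableOn ℂ p V)
    (hreg : ∀ τ ∈ V, ¬ InLattice τ (2 * p τ) ∧
      ∀ k : Fin 4, ¬ InLattice τ (p τ + halfp τ k / 2))
    (hell : ∀ τ ∈ V, HasDerivAt (deriv p)
      ((-1 / (4 * (Real.pi : ℂ) ^ 2)) *
        ∑ k : Fin 4, (1 / 2) * (n k + 1 / 2) ^ 2 * wpd τ (p τ + halfp τ k / 2)) τ)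
    (A : ℂ → ℂ)
    (hA : ∀ τ, A τ = 2 * (Real.pi : ℂ) * Complex.I * deriv p τ
      + (1 / 2) * (zeta τ (2 * p τ) - 2 * p τ * eta1 τ)) :
    HamSystem n zeta eta1 V p A :=
  elliptic_PVI_implies_hamiltonian_system_general n zeta eta1 hzeta heta1 V hVopen hVH p hpdiff
    (fun τ hτ => (hreg τ hτ).1) hell A hA
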